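/- Let F : 2^U → 2^V be the map induced by a weighted matching instance (G = (U,V;E), w) in which all matchings have pairwise distinct weights, and let 𝓕 := { F(U') : U' ⊆ U }. Then 𝓕 is union-closed: for all U₁, U₂ ⊆ U there exists U* ⊆ U such that F(U*) = F(U₁) ∪ F(U₂); in particular F(U₁) ∪ F(U₂) ∈ 𝓕. -/

import Mathlib

open scoped Classical

/-- `M` is a matching with edges inside the edge set `E`:
no two distinct edges of `M` share a left or a right endpoint. -/
def IsMatching {U V : Type*} (E M : Finset (U × V)) : Prop :=
  M ⊆ E ∧ ∀ e₁ ∈ M, ∀ e₂ ∈ M, (e₁.1 = e₂.1 ∨ e₁.2 = e₂.2) → e₁ = e₂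

/-- The edge set of the subgraph `G[U' ∪ V]` induced by deleting
the left vertices outside `U'` (and their incident edges). -/
noncomputable def restrictL {U V : Type*} (E : Finset (U × V)) (U' : Finset U) : Finset (U × V) :=
  E.filter (fun e => e.1 ∈ U')

/-- The weight of a matching: the sum of the weights of its edges. -/
noncomputable def mWeight {U V : Type*} (w : U × V → ℝ) (M : Finset (U × V)) : ℝ :=
  ∑ e ∈ M, w e

/-- `M` is a maximum-weight matching of the graph with edge set `E`. -/
def IsMaxMatching {U V : Type*} (E : Finset (U × V)) (w : U × V → ℝ)
    (M : Finset (U × V)) : Prop :=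
  IsMatching E M ∧ ∀ M' : Finset (U × V), IsMatching E M' → mWeight w M' ≤ mWeight w M

/-- All matchings of the graph with edge set `E` have pairwise distinct weights. -/
def DistinctWeights {U V : Type*} (E : Finset (U × V)) (w : U × V → ℝ) : Prop :=
  ∀ M₁ M₂ : Finset (U × V), IsMatching E M₁ → IsMatching E M₂ → M₁ ≠ M₂ →
    mWeight w M₁ ≠ mWeight w M₂

/-- The codomain `{ F(U') : U' ⊆ U }` of the map `F` induced by the weighted
matching instance: the family of all sets of right vertices matched by the
(unique) maximum-weight matching `MM(G, w; U')` of a subgraph `G[U' ∪ V]`. -/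
def mmFamily {U V : Type*} (E : Finset (U × V)) (w : U × V → ℝ) : Set (Finset V) :=
  {X | ∃ (U' : Finset U) (M : Finset (U × V)),
    IsMaxMatching (restrictL E U') w M ∧ X = M.image Prod.snd}

/-!
The marginal value `p v` of a right vertex `v`, the drop of the maximum weight when `v` is deleted,
is a competitive equilibrium price: by an exchange along alternating paths, every maximum-weight
matching assigns to each left vertex `u` it covers an edge of largest net weight `w (u, v) - p v`.
Conversely, by linear programming duality, a matching supported by such prices has maximum weight.
Uniqueness of the maximum-weight matching makes the price of every vertex it covers positive.

Given equilibria `(M₁, p₁)` and `(M₂, p₂)` for `U₁` and `U₂`, let each right vertex keep its partner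
from the matching in which it is more expensive. No left vertex is claimed twice, as it would have
to prefer one partner under `p₁` and the other under `p₂`, against the comparison of the prices. The
pointwise maximum of `p₁` and `p₂` supports the combined matching, which covers exactly the right
vertices covered by `M₁` or `M₂`.
-/

section

variable {U V : Type*} {E E' M N A B : Finset (U × V)} {w : U × V → ℝ} {u u' : U} {v v' : V}

lemma mem_image_fst : u ∈ M.image Prod.fst ↔ ∃ v, (u, v) ∈ M := by simp

lemma mem_image_snd : v ∈ M.image Prod.snd ↔ ∃ u, (u, v) ∈ M := by simp

lemma mem_restrictL {U' : Finset U} {e : U × V} : e ∈ restrictL E U' ↔ e ∈ E ∧ e.1 ∈ U' :=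
  Finset.mem_filter

namespace IsMatching

lemma mono (hM : IsMatching E M) (h : E ⊆ E') : IsMatching E' M :=
  ⟨hM.1.trans h, hM.2⟩

lemma subset (hM : IsMatching E M) (h : N ⊆ M) : IsMatching E N :=
  ⟨h.trans hM.1, fun e he f hf ↦ hM.2 e (h he) f (h hf)⟩

lemma of_restrictL {U' : Finset U} (hM : IsMatching (restrictL E U') M) : IsMatching E M :=
  hM.mono (Finset.filter_subset _ _)

lemma restrictL_image_fst (hM : IsMatching E M) :
    IsMatching (restrictL E (M.image Prod.fst)) M :=
  ⟨fun _ he ↦ mem_restrictL.2 ⟨hM.1 he, Finset.mem_image_of_mem _ he⟩, hM.2⟩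

lemma injOn_fst (hM : IsMatching E M) : Set.InjOn Prod.fst (M : Set (U × V)) :=
  fun e he f hf h ↦ hM.2 e he f hf (Or.inl h)

lemma injOn_snd (hM : IsMatching E M) : Set.InjOn Prod.snd (M : Set (U × V)) :=
  fun e he f hf h ↦ hM.2 e he f hf (Or.inr h)

lemma left_unique (hM : IsMatching E M) (h : (u, v) ∈ M) (h' : (u', v) ∈ M) : u = u' :=
  congrArg Prod.fst (hM.injOn_snd h h' rfl)

lemma right_unique (hM : IsMatching E M) (h : (u, v) ∈ M) (h' : (u, v') ∈ M) : v = v' :=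
  congrArg Prod.snd (hM.injOn_fst h h' rfl)

protected lemma insert (hM : IsMatching E M) (huv : (u, v) ∈ E) (hu : u ∉ M.image Prod.fst)
    (hv : v ∉ M.image Prod.snd) : IsMatching E (insert (u, v) M) := by
  have hdisj : ∀ e ∈ M, ¬(u = e.1 ∨ v = e.2) := by
    rintro e he (rfl | rfl)
    exacts [hu (Finset.mem_image_of_mem _ he), hv (Finset.mem_image_of_mem _ he)]
  refine ⟨Finset.insert_subset huv hM.1, fun e he f hf h ↦ ?_⟩
  rcases Finset.mem_insert.1 he with rfl | he <;> rcases Finset.mem_insert.1 hf with rfl | hf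
  · rfl
  · exact absurd h (hdisj f hf)
  · exact absurd (h.imp Eq.symm Eq.symm) (hdisj e he)
  · exact hM.2 e he f hf h

lemma notMem_image_fst_erase (hM : IsMatching E M) (huv : (u, v) ∈ M) :
    u ∉ (M.erase (u, v)).image Prod.fst := by
  rw [mem_image_fst]
  rintro ⟨v', h⟩
  obtain ⟨hne, h⟩ := Finset.mem_erase.1 h
  exact hne (by rw [hM.right_unique huv h])

lemma notMem_image_snd_erase (hM : IsMatching E M) (huv : (u, v) ∈ M) :
    v ∉ (M.erase (u, v)).image Prod.snd := by
  rw [mem_image_snd]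
  rintro ⟨u', h⟩
  obtain ⟨hne, h⟩ := Finset.mem_erase.1 h
  exact hne (by rw [hM.left_unique huv h])

end IsMatching

lemma mWeight_erase (huv : (u, v) ∈ M) : mWeight w (M.erase (u, v)) = mWeight w M - w (u, v) :=
  Finset.sum_erase_eq_sub huv

lemma mWeight_insert (huv : (u, v) ∉ M) :
    mWeight w (insert (u, v) M) = w (u, v) + mWeight w M :=
  Finset.sum_insert huv

/-- The edge set that agrees with `A` at the right vertices in `S` and with `B` at the others.
It is used to recombine two matchings into a new one. -/
noncomputable def splice (S : Set V) (A B : Finset (U × V)) : Finset (U × V) :=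
  {e ∈ A | e.2 ∈ S} ∪ {e ∈ B | e.2 ∉ S}

variable {S : Set V}

lemma mem_splice {e : U × V} :
    e ∈ splice S A B ↔ (e ∈ A ∧ e.2 ∈ S) ∨ (e ∈ B ∧ e.2 ∉ S) := by
  simp [splice]

lemma mem_image_snd_splice_of_mem (hv : v ∈ S) :
    v ∈ (splice S A B).image Prod.snd ↔ v ∈ A.image Prod.snd := by
  simp [mem_splice, hv]

lemma mem_image_snd_splice_of_notMem (hv : v ∉ S) :
    v ∈ (splice S A B).image Prod.snd ↔ v ∈ B.image Prod.snd := by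
  simp [mem_splice, hv]

lemma mWeight_splice_add_mWeight_splice (S : Set V) (A B : Finset (U × V)) (w : U × V → ℝ) :
    mWeight w (splice S A B) + mWeight w (splice S B A) = mWeight w A + mWeight w B := by
  have hsplice (A B : Finset (U × V)) :
      mWeight w (splice S A B) = ∑ e ∈ A with e.2 ∈ S, w e + ∑ e ∈ B with e.2 ∉ S, w e :=
    Finset.sum_union (Finset.disjoint_left.2 fun e hA hB ↦
      (Finset.mem_filter.1 hB).2 (Finset.mem_filter.1 hA).2)
  have hsplit (A : Finset (U × V)) :
      ∑ e ∈ A with e.2 ∈ S, w e + ∑ e ∈ A with e.2 ∉ S, w e = mWeight w A :=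
    Finset.sum_filter_add_sum_filter_not A _ w
  rw [hsplice, hsplice, ← hsplit A, ← hsplit B]
  ring

protected lemma IsMatching.splice (hA : IsMatching E A) (hB : IsMatching E B)
    (h : ∀ u v v', (u, v) ∈ A → (u, v') ∈ B → v ∈ S → v' ∈ S) :
    IsMatching E (splice S A B) := by
  have hdisj : ∀ e ∈ A, e.2 ∈ S → ∀ f ∈ B, f.2 ∉ S → ¬(e.1 = f.1 ∨ e.2 = f.2) := by
    rintro ⟨u, v⟩ he hv ⟨u', v'⟩ hf hv' (rfl | rfl)
    exacts [hv' (h u v v' he hf hv), hv' hv]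
  refine ⟨fun e he ↦ ?_, fun e he f hf hef ↦ ?_⟩
  · rcases mem_splice.1 he with he | he
    exacts [hA.1 he.1, hB.1 he.1]
  · rcases mem_splice.1 he with ⟨he, heS⟩ | ⟨he, heS⟩ <;>
      rcases mem_splice.1 hf with ⟨hf, hfS⟩ | ⟨hf, hfS⟩
    · exact hA.2 e he f hf hef
    · exact absurd hef (hdisj e he heS f hf hfS)
    · exact absurd (hef.imp Eq.symm Eq.symm) (hdisj f hf hfS e he heS)
    · exact hB.2 e he f hf hef

lemma mWeight_insert_splice_add_mWeight_splice (hvS : v ∈ S) (hv : v ∉ A.image Prod.snd) :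
    mWeight w (insert (u, v) (splice S A B)) + mWeight w (splice S B A) =
      w (u, v) + mWeight w A + mWeight w B := by
  have huv : (u, v) ∉ splice S A B := fun h ↦
    hv ((mem_image_snd_splice_of_mem hvS).1 (Finset.mem_image_of_mem Prod.snd h))
  rw [mWeight_insert huv, add_assoc, mWeight_splice_add_mWeight_splice, add_assoc]

lemma IsMatching.exists_isMatching_insert_splice (hA : IsMatching E A) (hB : IsMatching E B)
    (huv : (u, v) ∈ E) (hu : u ∉ B.image Prod.fst) (hv : v ∉ A.image Prod.snd) :
    ∃ S : Set V, v ∈ S ∧ IsMatching E (insert (u, v) (splice S A B)) ∧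
      IsMatching E (splice S B A) := by
  -- The right vertices on the alternating path that leaves `v` along an edge of `B`.
  let S : Set V := {b | Relation.ReflTransGen (fun a b ↦ ∃ z, (z, a) ∈ B ∧ (z, b) ∈ A) v b}
  have hvS : v ∈ S := Relation.ReflTransGen.refl
  have hforward : ∀ z a b, (z, a) ∈ B → (z, b) ∈ A → a ∈ S → b ∈ S :=
    fun z a b hBa hAb ha ↦ ha.tail ⟨z, hBa, hAb⟩
  have hbackward : ∀ z b, (z, b) ∈ A → b ∈ S → ∃ a ∈ S, (z, a) ∈ B := by
    intro z b hAb hb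
    rcases Relation.ReflTransGen.cases_tail hb with rfl | ⟨a, ha, z', hBa, hAb'⟩
    · exact absurd (mem_image_snd.2 ⟨z, hAb⟩) hv
    · exact ⟨a, ha, hA.left_unique hAb hAb' ▸ hBa⟩
  have hAB : IsMatching E (splice S A B) := hA.splice hB fun z b a hAb hBa hb ↦ by
    obtain ⟨a', ha', hBa'⟩ := hbackward z b hAb hb
    rwa [hB.right_unique hBa hBa']
  refine ⟨S, hvS, hAB.insert huv ?_ ?_, hB.splice hA hforward⟩
  · rw [mem_image_fst]
    rintro ⟨b, hb⟩
    rcases mem_splice.1 hb with ⟨hAb, hbS⟩ | ⟨hBb, -⟩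
    · obtain ⟨a, -, hBa⟩ := hbackward u b hAb hbS
      exact hu (mem_image_fst.2 ⟨a, hBa⟩)
    · exact hu (mem_image_fst.2 ⟨b, hBb⟩)
  · rwa [mem_image_snd_splice_of_mem hvS]

/-- The edge set of the graph with the right vertex `v` removed, on which marginal values of right
vertices are based. -/
noncomputable def deleteRight (E : Finset (U × V)) (v : V) : Finset (U × V) :=
  {e ∈ E | e.2 ≠ v}

lemma isMatching_deleteRight_iff :
    IsMatching (deleteRight E v) M ↔ IsMatching E M ∧ v ∉ M.image Prod.snd := by
  simp only [IsMatching, deleteRight, Finset.subset_iff, Finset.mem_filter, Finset.mem_image,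
    not_exists, not_and]
  grind

/-- The largest weight of a matching of the graph with edge set `E`. -/
noncomputable def maxWeight (E : Finset (U × V)) (w : U × V → ℝ) : ℝ :=
  Finset.sup' {M ∈ E.powerset | IsMatching E M} ⟨∅, by simp [IsMatching]⟩ (mWeight w)

lemma IsMatching.mWeight_le_maxWeight (hM : IsMatching E M) : mWeight w M ≤ maxWeight E w :=
  Finset.le_sup' _ (Finset.mem_filter.2 ⟨Finset.mem_powerset.2 hM.1, hM⟩)

lemma exists_isMatching_mWeight_eq_maxWeight (E : Finset (U × V)) (w : U × V → ℝ) :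
    ∃ M, IsMatching E M ∧ mWeight w M = maxWeight E w := by
  obtain ⟨M, hM, h⟩ := Finset.exists_mem_eq_sup' (s := {M ∈ E.powerset | IsMatching E M})
    ⟨∅, by simp [IsMatching]⟩ (mWeight w)
  exact ⟨M, (Finset.mem_filter.1 hM).2, h.symm⟩

lemma isMaxMatching_iff :
    IsMaxMatching E w M ↔ IsMatching E M ∧ mWeight w M = maxWeight E w := by
  refine ⟨fun hM ↦ ⟨hM.1, hM.1.mWeight_le_maxWeight.antisymm ?_⟩,
    fun ⟨hM, h⟩ ↦ ⟨hM, fun N hN ↦ hN.mWeight_le_maxWeight.trans_eq h.symm⟩⟩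
  obtain ⟨N, hN, h⟩ := exists_isMatching_mWeight_eq_maxWeight E w
  exact h ▸ hM.2 N hN

lemma maxWeight_deleteRight_le : maxWeight (deleteRight E v) w ≤ maxWeight E w := by
  obtain ⟨N, hN, h⟩ := exists_isMatching_mWeight_eq_maxWeight (deleteRight E v) w
  exact h ▸ (isMatching_deleteRight_iff.1 hN).1.mWeight_le_maxWeight

/-- The marginal value of the right vertex `v`, which serves as its equilibrium price. -/
noncomputable def marginalValue (E : Finset (U × V)) (w : U × V → ℝ) (v : V) : ℝ :=
  maxWeight E w - maxWeight (deleteRight E v) w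

lemma marginalValue_nonneg : 0 ≤ marginalValue E w v :=
  sub_nonneg.2 maxWeight_deleteRight_le

lemma marginalValue_pos (h : ∀ M, IsMaxMatching E w M → v ∈ M.image Prod.snd) :
    0 < marginalValue E w v := by
  refine sub_pos.2 (maxWeight_deleteRight_le.lt_of_ne fun heq ↦ ?_)
  obtain ⟨N, hN, hNw⟩ := exists_isMatching_mWeight_eq_maxWeight (deleteRight E v) w
  obtain ⟨hN, hv⟩ := isMatching_deleteRight_iff.1 hN
  exact hv (h N (isMaxMatching_iff.2 ⟨hN, hNw.trans heq⟩))

namespace IsMaxMatching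

lemma marginalValue_eq_zero (hM : IsMaxMatching E w M) (hv : v ∉ M.image Prod.snd) :
    marginalValue E w v = 0 := by
  obtain ⟨hM, hMw⟩ := isMaxMatching_iff.1 hM
  refine (sub_nonpos.2 ?_).antisymm marginalValue_nonneg
  exact hMw ▸ (isMatching_deleteRight_iff.2 ⟨hM, hv⟩).mWeight_le_maxWeight

lemma marginalValue_le (hM : IsMaxMatching E w M) (huv : (u, v) ∈ M) :
    marginalValue E w v ≤ w (u, v) := by
  obtain ⟨hM, hMw⟩ := isMaxMatching_iff.1 hM
  have herase : IsMatching (deleteRight E v) (M.erase (u, v)) :=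
    isMatching_deleteRight_iff.2
      ⟨hM.subset (Finset.erase_subset _ _), hM.notMem_image_snd_erase huv⟩
  have hle := herase.mWeight_le_maxWeight (w := w)
  rw [mWeight_erase huv, hMw] at hle
  rw [marginalValue]
  linarith

lemma le_marginalValue (hM : IsMaxMatching E w M) (huv : (u, v) ∈ E)
    (hu : u ∉ M.image Prod.fst) : w (u, v) ≤ marginalValue E w v := by
  obtain ⟨hM, hMw⟩ := isMaxMatching_iff.1 hM
  obtain ⟨A, hA, hAw⟩ := exists_isMatching_mWeight_eq_maxWeight (deleteRight E v) w
  obtain ⟨hA, hvA⟩ := isMatching_deleteRight_iff.1 hA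
  obtain ⟨S, hvS, hC, hD⟩ := hA.exists_isMatching_insert_splice hM huv hu hvA
  have hweight := mWeight_insert_splice_add_mWeight_splice (B := M) (u := u) (w := w) hvS hvA
  have hCw := hC.mWeight_le_maxWeight (w := w)
  have hDw := hD.mWeight_le_maxWeight (w := w)
  rw [marginalValue]
  linarith

lemma sub_marginalValue_le (hM : IsMaxMatching E w M) (huv : (u, v) ∈ M) (huv' : (u, v') ∈ E) :
    w (u, v') - marginalValue E w v' ≤ w (u, v) - marginalValue E w v := by
  obtain rfl | hne := eq_or_ne v v'
  · rfl
  obtain ⟨hM, hMw⟩ := isMaxMatching_iff.1 hM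
  obtain ⟨A, hA, hAw⟩ := exists_isMatching_mWeight_eq_maxWeight (deleteRight E v') w
  obtain ⟨hA, hvA⟩ := isMatching_deleteRight_iff.1 hA
  have hvB : v ∉ (M.erase (u, v)).image Prod.snd := hM.notMem_image_snd_erase huv
  obtain ⟨S, hvS, hC, hD⟩ := hA.exists_isMatching_insert_splice
    (hM.subset (Finset.erase_subset _ _)) huv' (hM.notMem_image_fst_erase huv) hvA
  have hweight := mWeight_insert_splice_add_mWeight_splice (B := M.erase (u, v)) (u := u) (w := w)
    hvS hvA
  rw [mWeight_erase huv] at hweight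
  suffices hbound : mWeight w (insert (u, v') (splice S A (M.erase (u, v)))) +
      mWeight w (splice S (M.erase (u, v)) A) ≤
        maxWeight E w + maxWeight (deleteRight E v) w by
    rw [marginalValue, marginalValue]
    linarith
  -- Only `A` can cover `v`, so one of the two exchanged matchings avoids `v`.
  by_cases hv : v ∈ S
  · have hD' : IsMatching (deleteRight E v) (splice S (M.erase (u, v)) A) :=
      isMatching_deleteRight_iff.2 ⟨hD, by rwa [mem_image_snd_splice_of_mem hv]⟩
    exact add_le_add hC.mWeight_le_maxWeight hD'.mWeight_le_maxWeight
  · have hC' : IsMatching (deleteRight E v) (insert (u, v') (splice S A (M.erase (u, v)))) := by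
      refine isMatching_deleteRight_iff.2 ⟨hC, ?_⟩
      rw [Finset.image_insert, Finset.mem_insert, mem_image_snd_splice_of_notMem hv, not_or]
      exact ⟨hne, hvB⟩
    rw [add_comm (maxWeight E w)]
    exact add_le_add hC'.mWeight_le_maxWeight hD.mWeight_le_maxWeight

end IsMaxMatching

/-- Competitive equilibrium of the assignment market with buyers `U` and goods `V`: at the prices
`p`, the matching `M` gives every buyer a good of largest net weight, or no good if no net weight is
positive, and unsold goods are free. It certifies that `M` has maximum weight. -/
structure IsEquilibrium (E : Finset (U × V)) (w : U × V → ℝ) (M : Finset (U × V)) (p : V → ℝ) :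
    Prop where
  isMatching : IsMatching E M
  nonneg : ∀ v, 0 ≤ p v
  eq_zero : ∀ v, v ∉ M.image Prod.snd → p v = 0
  le_weight : ∀ u v, (u, v) ∈ M → p v ≤ w (u, v)
  weight_le : ∀ u v, (u, v) ∈ E → u ∉ M.image Prod.fst → w (u, v) ≤ p v
  sub_le_sub : ∀ u v v', (u, v) ∈ M → (u, v') ∈ E → w (u, v') - p v' ≤ w (u, v) - p v

theorem IsMaxMatching.isEquilibrium_marginalValue (hM : IsMaxMatching E w M) :
    IsEquilibrium E w M (marginalValue E w) where
  isMatching := hM.1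
  nonneg _ := marginalValue_nonneg
  eq_zero _ := hM.marginalValue_eq_zero
  le_weight _ _ := hM.marginalValue_le
  weight_le _ _ := hM.le_marginalValue
  sub_le_sub _ _ _ := hM.sub_marginalValue_le

lemma sum_comp_le_sum_comp_of_injOn {ι α : Type*} {s t : Finset ι} {g : ι → α} {f : α → ℝ}
    (hs : Set.InjOn g s) (ht : Set.InjOn g t) (hf : ∀ a, 0 ≤ f a)
    (hf₀ : ∀ a, a ∉ t.image g → f a = 0) : ∑ i ∈ s, f (g i) ≤ ∑ i ∈ t, f (g i) := by
  rw [← Finset.sum_image hs, ← Finset.sum_image ht]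
  calc ∑ a ∈ s.image g, f a ≤ ∑ a ∈ s.image g ∪ t.image g, f a :=
        Finset.sum_le_sum_of_subset_of_nonneg Finset.subset_union_left fun a _ _ ↦ hf a
    _ = ∑ a ∈ t.image g, f a :=
        (Finset.sum_subset Finset.subset_union_right fun a _ ha ↦ hf₀ a ha).symm

lemma IsMatching.isMaxMatching_of_complementarySlackness (hM : IsMatching E M)
    {π : U → ℝ} {p : V → ℝ} (hπ : ∀ u, 0 ≤ π u) (hp : ∀ v, 0 ≤ p v)
    (hπ₀ : ∀ u, u ∉ M.image Prod.fst → π u = 0) (hp₀ : ∀ v, v ∉ M.image Prod.snd → p v = 0)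
    (hle : ∀ e ∈ E, w e ≤ π e.1 + p e.2) (heq : ∀ e ∈ M, π e.1 + p e.2 = w e) :
    IsMaxMatching E w M := by
  refine ⟨hM, fun N hN ↦ ?_⟩
  calc mWeight w N ≤ ∑ e ∈ N, (π e.1 + p e.2) := Finset.sum_le_sum fun e he ↦ hle e (hN.1 he)
    _ = ∑ e ∈ N, π e.1 + ∑ e ∈ N, p e.2 := Finset.sum_add_distrib
    _ ≤ ∑ e ∈ M, π e.1 + ∑ e ∈ M, p e.2 :=
        add_le_add (sum_comp_le_sum_comp_of_injOn hN.injOn_fst hM.injOn_fst hπ hπ₀)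
          (sum_comp_le_sum_comp_of_injOn hN.injOn_snd hM.injOn_snd hp hp₀)
    _ = ∑ e ∈ M, (π e.1 + p e.2) := Finset.sum_add_distrib.symm
    _ = mWeight w M := Finset.sum_congr rfl heq

namespace IsEquilibrium

variable {p p₁ p₂ : V → ℝ} {U₁ U₂ : Finset U} {M₁ M₂ : Finset (U × V)}

theorem isMaxMatching (h : IsEquilibrium E w M p) : IsMaxMatching E w M := by
  -- The net weight obtained by `u`, as a sum with at most one term.
  let π : U → ℝ := fun u ↦ ∑ e ∈ M with e.1 = u, (w e - p e.2)
  have hπ_mem : ∀ e ∈ M, π e.1 = w e - p e.2 := fun e he ↦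
    Finset.sum_eq_single_of_mem e (Finset.mem_filter.2 ⟨he, rfl⟩) fun f hf hne ↦
      absurd (h.isMatching.injOn_fst (Finset.mem_filter.1 hf).1 he (Finset.mem_filter.1 hf).2) hne
  have hπ_notMem : ∀ u, u ∉ M.image Prod.fst → π u = 0 := fun u hu ↦
    Finset.sum_eq_zero fun e he ↦
      (hu (Finset.mem_image.2 ⟨e, Finset.mem_filter.1 he⟩)).elim
  have hπ_nonneg : ∀ u, 0 ≤ π u := fun u ↦
    Finset.sum_nonneg fun e he ↦ sub_nonneg.2 (h.le_weight _ _ (Finset.mem_filter.1 he).1)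
  refine h.isMatching.isMaxMatching_of_complementarySlackness hπ_nonneg h.nonneg hπ_notMem
    h.eq_zero ?_ ?_
  · rintro ⟨u, v⟩ huv
    by_cases hu : u ∈ M.image Prod.fst
    · obtain ⟨v', huv'⟩ := mem_image_fst.1 hu
      linarith [hπ_mem _ huv', h.sub_le_sub u v' v huv' huv]
    · linarith [hπ_notMem u hu, h.weight_le u v huv hu]
  · intro e he
    linarith [hπ_mem e he]

lemma isMatching_splice (h₁ : IsEquilibrium (restrictL E U₁) w M₁ p₁)
    (h₂ : IsEquilibrium (restrictL E U₂) w M₂ p₂) :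
    IsMatching E (splice {v | p₂ v ≤ p₁ v} M₁ M₂) := by
  refine h₁.isMatching.of_restrictL.splice h₂.isMatching.of_restrictL fun u v v' hv hv' hle ↦ ?_
  obtain ⟨hvE, hu₁⟩ := mem_restrictL.1 (h₁.isMatching.1 hv)
  obtain ⟨hvE', hu₂⟩ := mem_restrictL.1 (h₂.isMatching.1 hv')
  have hprefer₁ := h₁.sub_le_sub u v v' hv (mem_restrictL.2 ⟨hvE', hu₁⟩)
  have hprefer₂ := h₂.sub_le_sub u v' v hv' (mem_restrictL.2 ⟨hvE, hu₂⟩)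
  rw [Set.mem_ofPred_eq] at hle ⊢
  linarith

lemma image_snd_splice (h₁ : IsEquilibrium E w M₁ p₁) (h₂ : IsEquilibrium E' w M₂ p₂)
    (hpos : ∀ v ∈ M₂.image Prod.snd, 0 < p₂ v) :
    (splice {v | p₂ v ≤ p₁ v} M₁ M₂).image Prod.snd =
      M₁.image Prod.snd ∪ M₂.image Prod.snd := by
  ext v
  rw [Finset.mem_union]
  by_cases hv : v ∈ {v | p₂ v ≤ p₁ v}
  · rw [mem_image_snd_splice_of_mem hv, or_iff_left_of_imp]
    intro hv₂
    by_contra hv₁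
    exact ((hpos v hv₂).trans_le hv).ne' (h₁.eq_zero v hv₁)
  · rw [mem_image_snd_splice_of_notMem hv, or_iff_right_of_imp]
    intro _
    by_contra hv₂
    exact ((h₁.nonneg v).trans_lt (not_le.1 hv)).ne' (h₂.eq_zero v hv₂)

protected theorem splice (h₁ : IsEquilibrium (restrictL E U₁) w M₁ p₁)
    (h₂ : IsEquilibrium (restrictL E U₂) w M₂ p₂) (hpos : ∀ v ∈ M₂.image Prod.snd, 0 < p₂ v) :
    IsEquilibrium (restrictL E ((splice {v | p₂ v ≤ p₁ v} M₁ M₂).image Prod.fst)) w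
      (splice {v | p₂ v ≤ p₁ v} M₁ M₂) (p₁ ⊔ p₂) where
  isMatching := (h₁.isMatching_splice h₂).restrictL_image_fst
  nonneg v := (h₁.nonneg v).trans le_sup_left
  eq_zero v hv := by
    rw [h₁.image_snd_splice h₂ hpos, Finset.mem_union, not_or] at hv
    rw [Pi.sup_apply, h₁.eq_zero v hv.1, h₂.eq_zero v hv.2, sup_idem]
  le_weight u v huv := by
    rcases mem_splice.1 huv with ⟨huv, hle⟩ | ⟨huv, hle⟩
    · exact sup_le (h₁.le_weight u v huv) (hle.trans (h₁.le_weight u v huv))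
    · exact sup_le ((not_le.1 hle).le.trans (h₂.le_weight u v huv)) (h₂.le_weight u v huv)
  weight_le u v huv hu := absurd (mem_restrictL.1 huv).2 hu
  sub_le_sub u v v' huv huv' := by
    have huvE' := (mem_restrictL.1 huv').1
    rcases mem_splice.1 huv with ⟨huv, hle⟩ | ⟨huv, hle⟩
    · have hu := (mem_restrictL.1 (h₁.isMatching.1 huv)).2
      calc w (u, v') - (p₁ ⊔ p₂) v' ≤ w (u, v') - p₁ v' := sub_le_sub_left le_sup_left _
        _ ≤ w (u, v) - p₁ v := h₁.sub_le_sub u v v' huv (mem_restrictL.2 ⟨huvE', hu⟩)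
        _ = w (u, v) - (p₁ ⊔ p₂) v := by rw [Pi.sup_apply, sup_of_le_left hle]
    · have hu := (mem_restrictL.1 (h₂.isMatching.1 huv)).2
      calc w (u, v') - (p₁ ⊔ p₂) v' ≤ w (u, v') - p₂ v' := sub_le_sub_left le_sup_right _
        _ ≤ w (u, v) - p₂ v := h₂.sub_le_sub u v v' huv (mem_restrictL.2 ⟨huvE', hu⟩)
        _ = w (u, v) - (p₁ ⊔ p₂) v := by rw [Pi.sup_apply, sup_of_le_right (not_le.1 hle).le]

end IsEquilibrium

lemma DistinctWeights.eq_of_isMaxMatching_restrictL (hdist : DistinctWeights E w) {U' : Finset U}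
    (hM : IsMaxMatching (restrictL E U') w M) (hN : IsMaxMatching (restrictL E U') w N) :
    M = N := by
  by_contra hne
  exact hdist M N hM.1.of_restrictL hN.1.of_restrictL hne
    ((hN.2 M hM.1).antisymm (hM.2 N hN.1))

end

theorem mm_family_union_closed_general {U V : Type*} {E : Finset (U × V)} {w : U × V → ℝ}
    {U₁ U₂ : Finset U} {M₁ M₂ : Finset (U × V)}
    (hM₁ : IsMaxMatching (restrictL E U₁) w M₁) (hM₂ : IsMaxMatching (restrictL E U₂) w M₂)
    (hcover : ∀ M, IsMaxMatching (restrictL E U₂) w M → M₂.image Prod.snd ⊆ M.image Prod.snd) :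
    ∃ (Ustar : Finset U) (Mstar : Finset (U × V)),
      IsMaxMatching (restrictL E Ustar) w Mstar ∧
        Mstar.image Prod.snd = M₁.image Prod.snd ∪ M₂.image Prod.snd := by
  have h₁ := hM₁.isEquilibrium_marginalValue
  have h₂ := hM₂.isEquilibrium_marginalValue
  have hpos : ∀ v ∈ M₂.image Prod.snd, 0 < marginalValue (restrictL E U₂) w v :=
    fun v hv ↦ marginalValue_pos fun M hM ↦ hcover M hM hv
  exact ⟨_, _, (h₁.splice h₂ hpos).isMaxMatching, h₁.image_snd_splice h₂ hpos⟩

/-- The family `𝓕 = { F(U') : U' ⊆ U }` induced by a weighted matching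
instance with pairwise distinct matching weights is union-closed: for all
`U₁, U₂ ⊆ U` there exists `U* ⊆ U` with `F(U*) = F(U₁) ∪ F(U₂)`;
in particular `F(U₁) ∪ F(U₂) ∈ 𝓕`. -/
theorem mm_family_union_closed {U V : Type*} [Fintype U] [Fintype V]
    (E : Finset (U × V)) (w : U × V → ℝ)
    (hdist : DistinctWeights E w) :
    ∀ (U₁ U₂ : Finset U) (M₁ M₂ : Finset (U × V)),
      IsMaxMatching (restrictL E U₁) w M₁ →
      IsMaxMatching (restrictL E U₂) w M₂ →
      (∃ (Ustar : Finset U) (Mstar : Finset (U × V)),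
          IsMaxMatching (restrictL E Ustar) w Mstar ∧
          Mstar.image Prod.snd = M₁.image Prod.snd ∪ M₂.image Prod.snd) ∧
      (M₁.image Prod.snd ∪ M₂.image Prod.snd) ∈ mmFamily E w := by
  intro U₁ U₂ M₁ M₂ hM₁ hM₂
  obtain ⟨Ustar, Mstar, hMstar, hunion⟩ := mm_family_union_closed_general hM₁ hM₂ fun M hM ↦
    (hdist.eq_of_isMaxMatching_restrictL hM₂ hM) ▸ subset_rfl
  exact ⟨⟨Ustar, Mstar, hMstar, hunion⟩, Ustar, Mstar, hMstar, hunion.symm⟩
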